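/- arXiv:2110.08433 — 3 statements merged into one kernel-verified Lean document; each statement's English description precedes it below -/
import Mathlib

section
/- Let h > 0, 0 < t_* < t₀, R > 0. Let q : (0,t₀] × [0,R) → ℝ be continuously differentiable and B : (0,t₀] × (0,R) → ℝ continuous, and suppose that t·(∂q/∂t)(t,ρ) + h·q(t,ρ) ≤ B(t,ρ)·(∂q/∂ρ)(t,ρ) for all (t,ρ) ∈ (0,t₀] × (0,R). Let ρ : (t_*, t₀] → (0,R) be differentiable with ρ′(t) = −B(t,ρ(t))/t for all t ∈ (t_*,t₀]. Set q*(t) = q(t,ρ(t)). Then for all t₁, τ with t_* < t₁ < τ ≤ t₀: q*(τ) ≤ (t₁/τ)^h · q*(t₁). -/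
/-!
Along a characteristic the chain rule gives `(q*)′ = ∂q/∂t − (B/t) ∂q/∂ρ`, so the differential
inequality for `q` becomes `t (q*)′ + h q* ≤ 0`, i.e. `(t ^ h q*)′ ≤ 0`; hence `t ^ h q*` is
antitone on `[t₁, τ]`, which is the estimate after division by `τ ^ h`.

Since `τ = t₀` is allowed and nothing is known about `q` at later times, the derivative is
computed only on the open interval `(t₁, τ)`, where continuity of the partial derivatives gives
joint differentiability (`hasDerivAt_along_curve`). At the endpoints only continuity is needed:
it holds because `∂q/∂ρ` is bounded on the compact set `[t₁, τ] × ρf([t₁, τ])`, so that `q` is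
Lipschitz in `ρ` uniformly in `t` there (`continuousOn_along_curve`).
-/

open Set Filter Topology

/-- Chain rule for a function of two variables whose partial derivatives exist and are continuous
on an open set `U`, along a curve that is differentiable at `t`. -/
theorem hasDerivAt_along_curve {q qt qρ : ℝ → ℝ → ℝ} {U : Set (ℝ × ℝ)} (hU : IsOpen U)
    (hqt : ∀ p ∈ U, HasDerivAt (fun t' => q t' p.2) (qt p.1 p.2) p.1)
    (hqρ : ∀ p ∈ U, HasDerivAt (fun ρ' => q p.1 ρ') (qρ p.1 p.2) p.2)
    (hqtc : ContinuousOn (fun p : ℝ × ℝ => qt p.1 p.2) U)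
    (hqρc : ContinuousOn (fun p : ℝ × ℝ => qρ p.1 p.2) U)
    {r : ℝ → ℝ} {r' t : ℝ} (hr : HasDerivAt r r' t) (ht : (t, r t) ∈ U) :
    HasDerivAt (fun s => q s (r s)) (qt t (r t) + r' * qρ t (r t)) t := by
  have hmem : U ∈ 𝓝 (t, r t) := hU.mem_nhds ht
  have hc (g : ℝ → ℝ → ℝ) (hg : ContinuousOn (fun p : ℝ × ℝ => g p.1 p.2) U) :
      ContinuousAt (fun p : ℝ × ℝ => ContinuousLinearMap.toSpanSingleton ℝ (g p.1 p.2))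
        (t, r t) :=
    (ContinuousLinearMap.toSpanSingletonCLE (𝕜 := ℝ) (E := ℝ)).continuous.continuousAt.comp
      (hg.continuousAt hmem)
  have key := hasStrictFDerivAt_uncurry_coprod (𝕜 := ℝ) (u := (t, r t)) (f := q)
    (f₁ := fun a b => ContinuousLinearMap.toSpanSingleton ℝ (qt a b))
    (f₂ := fun a b => ContinuousLinearMap.toSpanSingleton ℝ (qρ a b))
    (by filter_upwards [hmem] with p hp using (hqt p hp).hasFDerivAt)
    (by filter_upwards [hmem] with p hp using (hqρ p hp).hasFDerivAt)
    (hc qt hqtc) (hc qρ hqρc)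
  have h2 := key.hasFDerivAt.comp_hasDerivAt t ((hasDerivAt_id t).prodMk hr)
  refine HasDerivAt.congr_deriv (f := fun s => q s (r s)) h2 ?_
  change (1 : ℝ) • qt t (r t) + r' • qρ t (r t) = _
  simp

/-- Continuity up to the endpoints of a function of two variables along a curve over a compact
interval: near the curve the function is Lipschitz in the second variable uniformly in the
first. -/
theorem continuousOn_along_curve {q qρ : ℝ → ℝ → ℝ} {r : ℝ → ℝ} {a b : ℝ}
    (hr : ContinuousOn r (Icc a b))
    (hq : ∀ t ∈ Icc a b, ∀ ρ ∈ r '' Icc a b, ContinuousAt (fun t' => q t' ρ) t)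
    (hqρ : ∀ t ∈ Icc a b, ∀ ρ ∈ r '' Icc a b, HasDerivAt (fun ρ' => q t ρ') (qρ t ρ) ρ)
    (hqρc : ContinuousOn (fun p : ℝ × ℝ => qρ p.1 p.2) (Icc a b ×ˢ (r '' Icc a b))) :
    ContinuousOn (fun t => q t (r t)) (Icc a b) := by
  have hconv : Convex ℝ (r '' Icc a b) := (isPreconnected_Icc.image r hr).ordConnected.convex
  obtain ⟨C, hC⟩ := (isCompact_Icc.prod (isCompact_Icc.image_of_continuousOn hr)
    ).exists_bound_of_continuousOn hqρc
  have hcont : ContinuousOn (fun p : ℝ × ℝ => q p.1 p.2) (Icc a b ×ˢ (r '' Icc a b)) := by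
    refine continuousOn_prod_of_continuousOn_lipschitzOnWith' _ C.toNNReal (fun t ht => ?_)
      (fun ρ hρ t ht => (hq t ht ρ hρ).continuousWithinAt)
    refine hconv.lipschitzOnWith_of_nnnorm_hasDerivWithin_le
      (fun ρ hρ => (hqρ t ht ρ hρ).hasDerivWithinAt) (fun ρ hρ => ?_)
    have := hC (t, ρ) ⟨ht, hρ⟩
    exact NNReal.coe_le_coe.1 (this.trans (Real.le_coe_toNNReal C))
  exact hcont.comp (continuousOn_id.prodMk hr) fun t ht => ⟨ht, mem_image_of_mem r ht⟩


/-- **Lemma 7 (Gronwall-type decay along a characteristic curve).**  Let `q` be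
continuously differentiable on `(0,t₀] × [0,R)` (with partial derivatives `qt`, `qρ`)
satisfying `t·∂q/∂t + h·q ≤ B·∂q/∂ρ`, and let `ρf` be a characteristic curve, i.e. a
solution of `ρf′(t) = −B(t,ρf(t))/t` with values in `(0,R)`.  Then
`q*(τ) ≤ (t₁/τ)^h · q*(t₁)` for `t_* < t₁ < τ ≤ t₀`, where `q*(t) = q(t,ρf(t))`. -/
theorem gronwall_along_characteristic
    (h tstar t₀ R : ℝ) (hh : 0 < h) (htstar : 0 < tstar) (ht : tstar < t₀) (hR : 0 < R)
    (q qt qρ B : ℝ → ℝ → ℝ)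
    (hqt : ∀ t ∈ Set.Ioc (0 : ℝ) t₀, ∀ ρ ∈ Set.Ico (0 : ℝ) R,
      HasDerivAt (fun t' => q t' ρ) (qt t ρ) t)
    (hqρ : ∀ t ∈ Set.Ioc (0 : ℝ) t₀, ∀ ρ ∈ Set.Ico (0 : ℝ) R,
      HasDerivAt (fun ρ' => q t ρ') (qρ t ρ) ρ)
    (hqtc : ContinuousOn (fun p : ℝ × ℝ => qt p.1 p.2)
      (Set.Ioc (0 : ℝ) t₀ ×ˢ Set.Ico (0 : ℝ) R))
    (hqρc : ContinuousOn (fun p : ℝ × ℝ => qρ p.1 p.2)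
      (Set.Ioc (0 : ℝ) t₀ ×ˢ Set.Ico (0 : ℝ) R))
    (hBc : ContinuousOn (fun p : ℝ × ℝ => B p.1 p.2)
      (Set.Ioc (0 : ℝ) t₀ ×ˢ Set.Ioo (0 : ℝ) R))
    (hineq : ∀ t ∈ Set.Ioc (0 : ℝ) t₀, ∀ ρ ∈ Set.Ioo (0 : ℝ) R,
      t * qt t ρ + h * q t ρ ≤ B t ρ * qρ t ρ)
    (ρf : ℝ → ℝ)
    (hρf : ∀ t ∈ Set.Ioc tstar t₀, ρf t ∈ Set.Ioo (0 : ℝ) R ∧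
      HasDerivAt ρf (-(B t (ρf t)) / t) t) :
    ∀ t₁ τ : ℝ, tstar < t₁ → t₁ < τ → τ ≤ t₀ →
      q τ (ρf τ) ≤ (t₁ / τ) ^ h * q t₁ (ρf t₁) := by
  intro t₁ τ h1 h1τ hτ
  have ht₁ : 0 < t₁ := htstar.trans h1
  have hτ0 : 0 < τ := ht₁.trans h1τ
  have hI : ∀ t ∈ Icc t₁ τ, t ∈ Ioc tstar t₀ := fun t ht =>
    ⟨h1.trans_le ht.1, ht.2.trans hτ⟩
  have hI0 : ∀ t ∈ Icc t₁ τ, t ∈ Ioc (0 : ℝ) t₀ := fun t ht =>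
    ⟨ht₁.trans_le ht.1, ht.2.trans hτ⟩
  have hJ : ρf '' Icc t₁ τ ⊆ Ico 0 R := by
    rintro _ ⟨t, ht, rfl⟩
    exact Ioo_subset_Ico_self (hρf t (hI t ht)).1
  have hcont : ContinuousOn (fun t => q t (ρf t)) (Icc t₁ τ) :=
    continuousOn_along_curve
      (fun t ht => (hρf t (hI t ht)).2.continuousAt.continuousWithinAt)
      (fun t ht ρ hρ => (hqt t (hI0 t ht) ρ (hJ hρ)).continuousAt)
      (fun t ht ρ hρ => hqρ t (hI0 t ht) ρ (hJ hρ))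
      (hqρc.mono (prod_mono hI0 hJ))
  have hsub : Ioo (0 : ℝ) t₀ ×ˢ Ioo (0 : ℝ) R ⊆ Ioc (0 : ℝ) t₀ ×ˢ Ico (0 : ℝ) R :=
    prod_mono Ioo_subset_Ioc_self Ioo_subset_Ico_self
  have hderiv : ∀ t ∈ Ioo t₁ τ, HasDerivAt (fun s => s ^ h * q s (ρf s))
      (h * t ^ (h - 1) * q t (ρf t) +
        t ^ h * (qt t (ρf t) + -(B t (ρf t)) / t * qρ t (ρf t))) t := by
    intro t ht
    have hρt := hρf t (hI t (Ioo_subset_Icc_self ht))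
    have ht0 : 0 < t := ht₁.trans ht.1
    exact (Real.hasDerivAt_rpow_const (Or.inl ht0.ne')).mul
      (hasDerivAt_along_curve (isOpen_Ioo.prod isOpen_Ioo)
        (fun p hp => hqt _ (hsub hp).1 _ (hsub hp).2)
        (fun p hp => hqρ _ (hsub hp).1 _ (hsub hp).2)
        (hqtc.mono hsub) (hqρc.mono hsub) hρt.2
        ⟨⟨ht0, ht.2.trans_le hτ⟩, hρt.1⟩)
  have hanti : AntitoneOn (fun s => s ^ h * q s (ρf s)) (Icc t₁ τ) := by
    refine antitoneOn_of_deriv_nonpos (convex_Icc _ _)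
      ((Real.continuous_rpow_const hh.le).continuousOn.mul hcont) ?_ ?_
    · rw [interior_Icc]
      exact fun t ht => (hderiv t ht).differentiableAt.differentiableWithinAt
    · rw [interior_Icc]
      intro t ht
      have htI := Ioo_subset_Icc_self ht
      have ht0 : 0 < t := ht₁.trans ht.1
      have hle := hineq t (hI0 t htI) (ρf t) (hρf t (hI t htI)).1
      rw [(hderiv t ht).deriv]
      have hpow : t ^ h = t ^ (h - 1) * t := by
        rw [Real.rpow_sub_one ht0.ne', div_mul_cancel₀ _ ht0.ne']
      -- the derivative is `t ^ (h - 1)` times the defect in the differential inequality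
      have hfactor : h * t ^ (h - 1) * q t (ρf t) +
          t ^ h * (qt t (ρf t) + -(B t (ρf t)) / t * qρ t (ρf t)) =
          t ^ (h - 1) * (t * qt t (ρf t) + h * q t (ρf t) - B t (ρf t) * qρ t (ρf t)) := by
        rw [hpow]
        field_simp
        ring
      rw [hfactor]
      exact mul_nonpos_of_nonneg_of_nonpos (Real.rpow_nonneg ht0.le _) (by linarith)
  have hfin : τ ^ h * q τ (ρf τ) ≤ t₁ ^ h * q t₁ (ρf t₁) :=
    hanti (left_mem_Icc.2 h1τ.le) (right_mem_Icc.2 h1τ.le) h1τ.le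
  rw [Real.div_rpow ht₁.le hτ0.le, div_mul_eq_mul_div, le_div_iff₀ (Real.rpow_pos_of_pos hτ0 h)]
  linarith
end

section
/- Let h > 0, 0 < κ < 1, C₁, C₂, C₃, C₄ > 0, σ > 0, R > 0, r ≥ 0. Let q : (0,σ] × [0,R) → [0,∞) be continuously differentiable with q ≤ r, let B : (0,σ] × (0,R) → [0,∞) be continuous with B(t,ρ) ≤ C₁t^κ + C₂q(t,ρ) + C₃q(t,ρ)^{2/3} + C₄q(t,ρ)^{1/3}, and suppose t·∂q/∂t + h·q ≤ B·∂q/∂ρ on (0,σ] × (0,R). Assume (C₁/κ)σ^κ + (C₂/h)r + (3C₃/(2h))r^{2/3} + (3C₄/h)r^{1/3} < R/2. Then for every t₀ ∈ (0,σ] and every ξ ∈ (0,R/2) there exists a differentiable function ρ : (0,t₀] → (0,R) with ρ(t₀) = ξ and ρ′(t) = −B(t,ρ(t))/t for all t ∈ (0,t₀]; that is, every maximally extended backward solution of this initial value problem exists on all of (0,t₀]. -/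
/-!
In the logarithmic time `s = log (t₀ / t)` the characteristic equation `ρ' = -B(t, ρ) / t` on
`(0, t₀]` becomes `y' = B(t₀ e^{-s}, y)`, `y 0 = ξ`, on `[0, ∞)`.

*Existence.* Clamping `ρ` to `[ξ, R₁]` with `R₁ = ξ + R / 2 < R` makes the right-hand side
continuous and bounded on the whole plane, so a Peano theorem for bounded continuous right-hand
sides (`peano`) yields a solution for all `s ≥ 0`, and no maximal-extension argument is needed.
Mathlib has no Peano theorem; the one here takes the pointwise limit of explicit Euler schemes along
an ultrafilter on `ℕ`. The local slope estimate `euler_step_dev` holds uniformly in the step size,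
hence survives the limit and is differentiability of the limit function.

*A priori bound.* The solution is nondecreasing in `s`. If it reached `R₁` at a time `s₁`, then it
would solve the unclamped equation on `[0, s₁]`, and `Q s = q(t₀ e^{-s}, y s)` would satisfy
`Q' = -t ∂q/∂t + B ∂q/∂ρ ≥ h Q`. So `Q s ≤ r e^{-h (s₁ - s)}`, and integrating the bound on
`B` gives `y s₁ - ξ ≤ (C₁/κ) σ^κ + (C₂/h) r + (3C₃/(2h)) r^{2/3} + (3C₄/h) r^{1/3} < R / 2`
(`displacement_bound`), contradicting `y s₁ = R₁`. Hence the clamp is never active.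
-/

open Set Filter Topology

/-! ### Peano's theorem for a bounded continuous right-hand side -/

/-- Explicit Euler scheme with step `δ` for `y' = F s y`, `y 0 = ξ`: the value
`eulerSeq F ξ δ k` approximates the solution at time `k * δ`. -/
noncomputable def eulerSeq (F : ℝ → ℝ → ℝ) (ξ δ : ℝ) : ℕ → ℝ
  | 0 => ξ
  | k + 1 => eulerSeq F ξ δ k + δ * F (k * δ) (eulerSeq F ξ δ k)

/-- If all slopes used between the grid indices `i` and `j` are `ε`-close to `c`, then so is the
average slope. -/
lemma eulerSeq_dev (F : ℝ → ℝ → ℝ) (ξ : ℝ) {δ : ℝ} (hδ : 0 ≤ δ) (c ε : ℝ) {i j : ℕ} (hij : i ≤ j)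
    (hb : ∀ k, i ≤ k → k < j → |F (k * δ) (eulerSeq F ξ δ k) - c| ≤ ε) :
    |eulerSeq F ξ δ j - eulerSeq F ξ δ i - c * ((j - i) * δ)| ≤ ε * ((j - i) * δ) := by
  induction j, hij using Nat.le_induction with
  | base => simp
  | succ j hij ih =>
    have h1 := ih fun k hk hkj => hb k hk (by omega)
    have h2 := hb j hij (by omega)
    rw [abs_le] at h1 h2 ⊢
    simp only [eulerSeq]
    push_cast
    constructor <;> nlinarith [mul_le_mul_of_nonneg_left h2.1 hδ, mul_le_mul_of_nonneg_left h2.2 hδ]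

/-- The Euler scheme is Lipschitz on its grid. -/
lemma eulerSeq_lip {F : ℝ → ℝ → ℝ} {M : ℝ} (hM : ∀ s y, |F s y| ≤ M) (ξ : ℝ) {δ : ℝ} (hδ : 0 ≤ δ)
    (i j : ℕ) : |eulerSeq F ξ δ j - eulerSeq F ξ δ i| ≤ M * |j * δ - i * δ| := by
  wlog hij : i ≤ j generalizing i j
  · rw [abs_sub_comm, abs_sub_comm (j * δ : ℝ)]
    exact this j i (by omega)
  have h := eulerSeq_dev F ξ hδ 0 M hij fun k _ _ => by simpa using hM _ _
  rw [← sub_mul, abs_of_nonneg (mul_nonneg (sub_nonneg.2 (by exact_mod_cast hij)) hδ)]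
  simpa using h

lemma floor_mul_bounds {δ s : ℝ} (hδ : 0 < δ) (hs : 0 ≤ s) :
    (⌊s / δ⌋₊ : ℝ) * δ ≤ s ∧ s < (⌊s / δ⌋₊ : ℝ) * δ + δ := by
  have h1 := Nat.floor_le (div_nonneg hs hδ.le)
  have h2 := Nat.lt_floor_add_one (s / δ)
  rw [le_div_iff₀ hδ] at h1
  rw [div_lt_iff₀ hδ] at h2
  exact ⟨h1, by linarith⟩

/-- The local estimate for the step function `s ↦ eulerSeq F ξ δ ⌊s / δ⌋₊`: near a point where
`F` is `ε`-close to `c`, its increments have slope `ε`-close to `c`, up to an error `O(δ)`. -/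
lemma euler_step_dev {F : ℝ → ℝ → ℝ} {M : ℝ} (hM : ∀ s y, |F s y| ≤ M) (ξ : ℝ)
    {δ : ℝ} (hδ : 0 < δ) {s y c ε η : ℝ} (hε : 0 ≤ ε) (hs : 0 ≤ s)
    (hF : ∀ u z, |u - s| < η → |z - y| < η → |F u z - c| ≤ ε)
    {η' : ℝ} (hη1 : 2 * η' ≤ η) (hη2 : 3 * M * η' ≤ 3 / 4 * η) (hδη : δ < η')
    (hy : |eulerSeq F ξ δ ⌊s / δ⌋₊ - y| < η / 4)
    {a b : ℝ} (ha : 0 ≤ a) (hab : a ≤ b) (has : |a - s| < η') (hbs : |b - s| < η') :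
    |eulerSeq F ξ δ ⌊b / δ⌋₊ - eulerSeq F ξ δ ⌊a / δ⌋₊ - c * (b - a)|
      ≤ ε * (b - a) + (ε + |c|) * δ := by
  have hM0 : 0 ≤ M := (abs_nonneg _).trans (hM 0 0)
  obtain ⟨ha1, ha2⟩ := floor_mul_bounds hδ ha
  obtain ⟨hb1, hb2⟩ := floor_mul_bounds hδ (ha.trans hab)
  obtain ⟨hs1, hs2⟩ := floor_mul_bounds hδ hs
  have hij : ⌊a / δ⌋₊ ≤ ⌊b / δ⌋₊ := Nat.floor_mono (by gcongr)
  rw [abs_lt] at has hbs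
  have key := eulerSeq_dev F ξ hδ.le c ε hij (by
    intro k hik hkj
    have h1 : (⌊a / δ⌋₊ : ℝ) * δ ≤ k * δ := by gcongr
    have h2 : (k : ℝ) * δ ≤ ⌊b / δ⌋₊ * δ := by gcongr
    apply hF
    · rw [abs_lt]; constructor <;> linarith
    · have h3 := eulerSeq_lip hM ξ hδ.le ⌊s / δ⌋₊ k
      have h4 : |(k : ℝ) * δ - ⌊s / δ⌋₊ * δ| ≤ 3 * η' := by
        rw [abs_le]; constructor <;> linarith
      have h5 := mul_le_mul_of_nonneg_left h4 hM0
      have h6 := abs_sub_le (eulerSeq F ξ δ k) (eulerSeq F ξ δ ⌊s / δ⌋₊) y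
      linarith)
  set D := ((⌊b / δ⌋₊ : ℝ) - ⌊a / δ⌋₊) * δ with hD
  have hDa : |D - (b - a)| ≤ δ := by
    rw [hD, abs_le]; constructor <;> linarith
  have h7 : |c * (D - (b - a))| ≤ |c| * δ := by
    rw [abs_mul]; gcongr
  have h8 : ε * D ≤ ε * (b - a) + ε * δ := by
    rw [abs_le] at hDa
    nlinarith
  have h9 := abs_add_le
    (eulerSeq F ξ δ ⌊b / δ⌋₊ - eulerSeq F ξ δ ⌊a / δ⌋₊ - c * D) (c * (D - (b - a)))
  have h10 : eulerSeq F ξ δ ⌊b / δ⌋₊ - eulerSeq F ξ δ ⌊a / δ⌋₊ - c * D + c * (D - (b - a))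
    = eulerSeq F ξ δ ⌊b / δ⌋₊ - eulerSeq F ξ δ ⌊a / δ⌋₊ - c * (b - a) := by ring
  rw [h10] at h9
  linarith

/-- Peano's theorem on the half-line for a bounded continuous right-hand side. The solution is the
pointwise limit of Euler step functions along an ultrafilter: the local estimate `euler_step_dev` is
uniform in the step, so it passes to the limit and gives differentiability directly. -/
lemma peano_half_line {F : ℝ → ℝ → ℝ} {M : ℝ} (hM : ∀ s y, |F s y| ≤ M)
    (hF : Continuous fun p : ℝ × ℝ => F p.1 p.2) (ξ : ℝ) :
    ∃ y : ℝ → ℝ, y 0 = ξ ∧ ∀ s, 0 ≤ s → HasDerivWithinAt y (F s (y s)) (Ici 0) s := by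
  have hM0 : 0 ≤ M := (abs_nonneg _).trans (hM 0 0)
  let U : Ultrafilter ℕ := hyperfilter ℕ
  have hU : (U : Filter ℕ) ≤ atTop := Nat.hyperfilter_le_atTop
  let δ : ℕ → ℝ := fun n => 1 / ((n : ℝ) + 1)
  have hδ : ∀ n, 0 < δ n := fun n => Nat.one_div_pos_of_nat
  have hδ0 : Tendsto δ U (𝓝 0) := tendsto_one_div_add_atTop_nhds_zero_nat.mono_left hU
  let Y : ℕ → ℝ → ℝ := fun n s => eulerSeq F ξ (δ n) ⌊s / δ n⌋₊
  have hlim : ∀ s, ∃ y, 0 ≤ s → Tendsto (fun n => Y n s) U (𝓝 y) := by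
    intro s
    by_cases hs : 0 ≤ s
    · have hmem : ∀ n, Y n s ∈ Icc (ξ - M * s) (ξ + M * s) := by
        intro n
        have h1 := eulerSeq_lip hM ξ (hδ n).le 0 ⌊s / δ n⌋₊
        have h2 := (floor_mul_bounds (hδ n) hs).1
        have h3 : (0 : ℝ) ≤ ⌊s / δ n⌋₊ * δ n := mul_nonneg (Nat.cast_nonneg _) (hδ n).le
        simp only [Nat.cast_zero, zero_mul, sub_zero, abs_of_nonneg h3] at h1
        have h4 := h1.trans (mul_le_mul_of_nonneg_left h2 hM0)
        rw [abs_le] at h4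
        simp only [eulerSeq] at h4
        exact ⟨by simp only [Y]; linarith, by simp only [Y]; linarith⟩
      obtain ⟨y, -, hy⟩ := (isCompact_Icc (a := ξ - M * s) (b := ξ + M * s)).ultrafilter_le_nhds
        (U.map fun n => Y n s)
        (le_principal_iff.2 (Eventually.of_forall hmem : ∀ᶠ n in (U : Filter ℕ), _))
      exact ⟨y, fun _ => hy⟩
    · exact ⟨0, fun h => absurd h hs⟩
  choose y hy using hlim
  refine ⟨y, ?_, ?_⟩
  · refine tendsto_nhds_unique (hy 0 le_rfl) ?_
    simp [Y, eulerSeq]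
  intro s hs
  rw [hasDerivWithinAt_iff_isLittleO, Asymptotics.isLittleO_iff]
  intro ε hε
  obtain ⟨η, hη, hFη⟩ := Metric.continuousAt_iff.1 (hF.continuousAt (x := (s, y s))) ε hε
  have hFη' : ∀ u z, |u - s| < η → |z - y s| < η → |F u z - F s (y s)| ≤ ε := by
    intro u z hu hz
    have := @hFη (u, z) (by rw [Prod.dist_eq]; exact max_lt hu hz)
    exact this.le
  set η' := η / (4 * (M + 1)) with hη'
  have hη'0 : 0 < η' := by positivity
  have hmul : η' * (4 * (M + 1)) = η := by rw [hη']; field_simp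
  have hprod : 0 ≤ M * η' := by positivity
  have hη1 : 2 * η' ≤ η := by nlinarith
  have hη2 : 3 * M * η' ≤ 3 / 4 * η := by nlinarith
  have hnear : ∀ᶠ t in 𝓝[Ici 0] s, |t - s| < η' :=
    mem_nhdsWithin_of_mem_nhds (Metric.ball_mem_nhds s hη'0)
  filter_upwards [hnear, self_mem_nhdsWithin] with t hts ht0
  have ht0 : 0 ≤ t := ht0
  have hev1 : ∀ᶠ n in (U : Filter ℕ), δ n < η' := hδ0.eventually (gt_mem_nhds hη'0)
  have hev2 : ∀ᶠ n in (U : Filter ℕ), |Y n s - y s| < η / 4 :=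
    (hy s hs) (Metric.ball_mem_nhds _ (by positivity))
  have hss : |s - s| < η' := by simpa using hη'0
  have hev : ∀ᶠ n in (U : Filter ℕ),
      |Y n t - Y n s - F s (y s) * (t - s)| ≤ ε * |t - s| + (ε + |F s (y s)|) * δ n := by
    filter_upwards [hev1, hev2] with n h1 h2
    rcases le_total s t with hst | hst
    · have := euler_step_dev hM ξ (hδ n) hε.le hs hFη' hη1 hη2 h1 h2 hs hst hss hts
      rwa [abs_of_nonneg (sub_nonneg.2 hst)]
    · have := euler_step_dev hM ξ (hδ n) hε.le hs hFη' hη1 hη2 h1 h2 ht0 hst hts hss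
      rw [abs_sub_comm t s, abs_of_nonneg (sub_nonneg.2 hst), ← abs_neg]
      convert this using 2
      simp only [Y]; ring
  have hL : Tendsto (fun n => |Y n t - Y n s - F s (y s) * (t - s)|) U
      (𝓝 |y t - y s - F s (y s) * (t - s)|) :=
    (((hy t ht0).sub (hy s hs)).sub_const _).abs
  have hRt : Tendsto (fun n => ε * |t - s| + (ε + |F s (y s)|) * δ n) U (𝓝 (ε * |t - s|)) := by
    simpa using (hδ0.const_mul (ε + |F s (y s)|)).const_add (ε * |t - s|)
  have := le_of_tendsto_of_tendsto hL hRt hev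
  simpa [Real.norm_eq_abs, mul_comm] using this

/-- Extending a half-line solution to negative times by its tangent makes the derivative
two-sided at time `0`. -/
lemma peano {F : ℝ → ℝ → ℝ} {M : ℝ} (hM : ∀ s y, |F s y| ≤ M)
    (hF : Continuous fun p : ℝ × ℝ => F p.1 p.2) (ξ : ℝ) :
    ∃ y : ℝ → ℝ, y 0 = ξ ∧ ∀ s, 0 ≤ s → HasDerivAt y (F s (y s)) s := by
  obtain ⟨y, hy0, hy⟩ := peano_half_line hM hF ξ
  let z : ℝ → ℝ := fun s => if 0 ≤ s then y s else ξ + F 0 ξ * s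
  have hz : ∀ s, 0 ≤ s → z s = y s := fun s hs => if_pos hs
  refine ⟨z, by rw [hz 0 le_rfl, hy0], fun s hs => ?_⟩
  have h1 : HasDerivWithinAt z (F s (z s)) (Ici 0) s := by
    rw [hz s hs]
    exact (hy s hs).congr (fun x hx => hz x hx) (hz s hs)
  rcases hs.lt_or_eq with hs' | rfl
  · exact h1.hasDerivAt (Ici_mem_nhds hs')
  · have h2 : HasDerivWithinAt z (F 0 (z 0)) (Iic 0) 0 := by
      rw [hz 0 le_rfl, hy0]
      have h3 : HasDerivAt (fun s : ℝ => ξ + F 0 ξ * s) (F 0 ξ) 0 := by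
        simpa using ((hasDerivAt_id (0 : ℝ)).const_mul (F 0 ξ)).const_add ξ
      refine h3.hasDerivWithinAt.congr (fun x hx => ?_) (by simp [z, hy0])
      rcases (mem_Iic.1 hx).lt_or_eq with hx' | rfl
      · exact if_neg (not_le.2 hx')
      · simp [z, hy0]
    have h4 := h2.union h1
    rwa [Iic_union_Ici, hasDerivWithinAt_univ] at h4

/-! ### A priori bound along characteristics -/

lemma hasDerivAt_exp_profile {k : ℝ} (hk : k ≠ 0) (A a s : ℝ) :
    HasDerivAt (fun s => A / k * Real.exp (k * (s - a))) (A * Real.exp (k * (s - a))) s := by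
  have h := ((((hasDerivAt_id s).sub_const a).const_mul k).exp).const_mul (A / k)
  refine h.congr_deriv ?_
  simp only [id]
  field_simp

lemma rpow_le_exp_profile {Q r a p : ℝ} (hQ : 0 ≤ Q) (hr : 0 ≤ r) (hp : 0 ≤ p)
    (h : Q ≤ r * Real.exp a) : Q ^ p ≤ r ^ p * Real.exp (a * p) := by
  rw [Real.exp_mul, ← Real.mul_rpow hr (Real.exp_pos a).le]
  exact Real.rpow_le_rpow hQ h hp

/-- If `y' ≤ B` with `B` bounded through `Q` and `e^{-hs} Q` is nondecreasing, then `Q` decays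
exponentially away from the *final* time `s₁`, so every contribution to `y s₁ - y 0` is bounded
independently of `s₁`. -/
lemma displacement_bound {h κ C₁ C₂ C₃ C₄ r t₀ s₁ : ℝ} (hh : 0 < h) (hκ0 : 0 < κ)
    (hC₁ : 0 < C₁) (hC₂ : 0 < C₂) (hC₃ : 0 < C₃) (hC₄ : 0 < C₄) (ht₀ : 0 < t₀) (hr : 0 ≤ r)
    (hs₁ : 0 ≤ s₁) {y y' Q Q' : ℝ → ℝ} (hyc : ContinuousOn y (Icc 0 s₁))
    (hy : ∀ s ∈ Ioo 0 s₁, HasDerivAt y (y' s) s)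
    (hQ : ∀ s ∈ Ioc 0 s₁, HasDerivAt Q (Q' s) s) (hQQ' : ∀ s ∈ Ioc 0 s₁, h * Q s ≤ Q' s)
    (hQ0 : ∀ s ∈ Ioc 0 s₁, 0 ≤ Q s) (hQr : ∀ s ∈ Ioc 0 s₁, Q s ≤ r)
    (hyb : ∀ s ∈ Ioo 0 s₁, y' s ≤ C₁ * (t₀ * Real.exp (-s)) ^ κ + C₂ * Q s
      + C₃ * Q s ^ ((2 : ℝ) / 3) + C₄ * Q s ^ ((1 : ℝ) / 3)) :
    y s₁ - y 0 ≤ (C₁ / κ) * t₀ ^ κ + (C₂ / h) * r + (3 * C₃ / (2 * h)) * r ^ ((2 : ℝ) / 3)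
      + (3 * C₄ / h) * r ^ ((1 : ℝ) / 3) := by
  have decay : ∀ s ∈ Ioo 0 s₁, Q s ≤ r * Real.exp (h * (s - s₁)) := by
    intro s hs
    have hsub : Icc s s₁ ⊆ Ioc 0 s₁ := fun x hx => ⟨hs.1.trans_le hx.1, hx.2⟩
    have hd : ∀ x ∈ Icc s s₁, HasDerivAt (fun x => Q x * Real.exp (-h * (x - s₁)))
        (Q' x * Real.exp (-h * (x - s₁)) + Q x * (Real.exp (-h * (x - s₁)) * (-h))) x := by
      intro x hx
      have h1 := (((hasDerivAt_id x).sub_const s₁).const_mul (-h)).exp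
      refine ((hQ x (hsub hx)).mul h1).congr_deriv ?_
      simp
    have hmono : MonotoneOn (fun x => Q x * Real.exp (-h * (x - s₁))) (Icc s s₁) := by
      refine monotoneOn_of_deriv_nonneg (convex_Icc _ _)
        (fun x hx => (hd x hx).continuousAt.continuousWithinAt)
        (fun x hx => (hd x (interior_subset hx)).differentiableAt.differentiableWithinAt) ?_
      intro x hx
      have hx := interior_subset hx
      rw [(hd x hx).deriv]
      have := mul_nonneg (sub_nonneg.2 (hQQ' x (hsub hx))) (Real.exp_pos (-h * (x - s₁))).le
      linarith
    have h1 := hmono (left_mem_Icc.2 hs.2.le) (right_mem_Icc.2 hs.2.le) hs.2.le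
    simp only [sub_self, mul_zero, Real.exp_zero, mul_one] at h1
    have h2 := h1.trans (hQr s₁ ⟨hs.1.trans hs.2, le_rfl⟩)
    have h3 := mul_le_mul_of_nonneg_right h2 (Real.exp_pos (h * (s - s₁))).le
    rwa [mul_assoc, ← Real.exp_add, show -h * (s - s₁) + h * (s - s₁) = 0 by ring, Real.exp_zero,
      mul_one] at h3
  -- `G` is an explicit primitive of the resulting exponential bound on `y'`.
  let G : ℝ → ℝ := fun s => (C₁ * t₀ ^ κ) / (-κ) * Real.exp (-κ * (s - 0))
    + (C₂ * r) / h * Real.exp (h * (s - s₁))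
    + (C₃ * r ^ ((2 : ℝ) / 3)) / (h * (2 / 3)) * Real.exp (h * (2 / 3) * (s - s₁))
    + (C₄ * r ^ ((1 : ℝ) / 3)) / (h * (1 / 3)) * Real.exp (h * (1 / 3) * (s - s₁))
  have hG : ∀ s, HasDerivAt G ((C₁ * t₀ ^ κ) * Real.exp (-κ * (s - 0))
      + (C₂ * r) * Real.exp (h * (s - s₁))
      + (C₃ * r ^ ((2 : ℝ) / 3)) * Real.exp (h * (2 / 3) * (s - s₁))
      + (C₄ * r ^ ((1 : ℝ) / 3)) * Real.exp (h * (1 / 3) * (s - s₁))) s := fun s =>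
    (((hasDerivAt_exp_profile (neg_ne_zero.2 hκ0.ne') _ _ s).add
      (hasDerivAt_exp_profile hh.ne' _ _ s)).add
      (hasDerivAt_exp_profile (by positivity) _ _ s)).add
      (hasDerivAt_exp_profile (by positivity) _ _ s)
  have hmono : MonotoneOn (fun s => G s - y s) (Icc 0 s₁) := by
    refine monotoneOn_of_deriv_nonneg (convex_Icc _ _)
      (ContinuousOn.sub (fun s _ => (hG s).continuousAt.continuousWithinAt) hyc) ?_ ?_
    · rw [interior_Icc]
      exact fun s hs => ((hG s).sub (hy s hs)).differentiableAt.differentiableWithinAt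
    · rw [interior_Icc]
      intro s hs
      have hGy := ((hG s).sub (hy s hs)).deriv
      rw [show (fun s => G s - y s) = G - y from rfl, hGy, sub_nonneg]
      have hs' : s ∈ Ioc 0 s₁ := ⟨hs.1, hs.2.le⟩
      have e1 : (t₀ * Real.exp (-s)) ^ κ = t₀ ^ κ * Real.exp (-κ * (s - 0)) := by
        rw [Real.mul_rpow ht₀.le (Real.exp_pos _).le, ← Real.exp_mul]
        congr 2; ring
      have e2 := decay s hs
      have e3 := rpow_le_exp_profile (hQ0 s hs') hr (p := 2 / 3) (by norm_num) e2
      have e4 := rpow_le_exp_profile (hQ0 s hs') hr (p := 1 / 3) (by norm_num) e2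
      rw [show h * (s - s₁) * (2 / 3) = h * (2 / 3) * (s - s₁) by ring] at e3
      rw [show h * (s - s₁) * (1 / 3) = h * (1 / 3) * (s - s₁) by ring] at e4
      have e5 := hyb s hs
      rw [e1] at e5
      have e6 := mul_le_mul_of_nonneg_left e2 hC₂.le
      have e7 := mul_le_mul_of_nonneg_left e3 hC₃.le
      have e8 := mul_le_mul_of_nonneg_left e4 hC₄.le
      linarith
  have hfin := hmono (left_mem_Icc.2 hs₁) (right_mem_Icc.2 hs₁) hs₁
  have hG1 : G s₁ ≤ (C₂ / h) * r + (3 * C₃ / (2 * h)) * r ^ ((2 : ℝ) / 3)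
      + (3 * C₄ / h) * r ^ ((1 : ℝ) / 3) := by
    have : 0 ≤ (C₁ * t₀ ^ κ) / κ * Real.exp (-κ * (s₁ - 0)) := by positivity
    have e : G s₁ = -((C₁ * t₀ ^ κ) / κ * Real.exp (-κ * (s₁ - 0))) + ((C₂ / h) * r
        + (3 * C₃ / (2 * h)) * r ^ ((2 : ℝ) / 3) + (3 * C₄ / h) * r ^ ((1 : ℝ) / 3)) := by
      simp only [G, sub_self, mul_zero, Real.exp_zero]
      field_simp
      ring
    linarith
  have hG0 : -((C₁ / κ) * t₀ ^ κ) ≤ G 0 := by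
    have p2 : 0 ≤ (C₂ * r) / h * Real.exp (h * (0 - s₁)) := by positivity
    have p3 : 0 ≤ (C₃ * r ^ ((2 : ℝ) / 3)) / (h * (2 / 3)) * Real.exp (h * (2 / 3) * (0 - s₁)) := by
      positivity
    have p4 : 0 ≤ (C₄ * r ^ ((1 : ℝ) / 3)) / (h * (1 / 3)) * Real.exp (h * (1 / 3) * (0 - s₁)) := by
      positivity
    have e : (C₁ * t₀ ^ κ) / (-κ) * Real.exp (-κ * (0 - 0)) = -((C₁ / κ) * t₀ ^ κ) := by
      simp only [sub_self, mul_zero, Real.exp_zero]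
      field_simp
    simp only [G]
    rw [e]
    linarith
  simp only at hfin
  linarith

/-- Chain rule for `q` along the curve `s ↦ (t₀ e^{-s}, y s)`, from continuous partial
derivatives. Only `s > 0` is covered, so that `(t₀ e^{-s}, y s)` is interior to the domain. -/
lemma hasDerivAt_along {σ R t₀ s v : ℝ} {q qt qρ : ℝ → ℝ → ℝ} {y : ℝ → ℝ}
    (hqt : ∀ t ∈ Set.Ioc (0 : ℝ) σ, ∀ ρ ∈ Set.Ico (0 : ℝ) R,
      HasDerivAt (fun t' => q t' ρ) (qt t ρ) t)
    (hqρ : ∀ t ∈ Set.Ioc (0 : ℝ) σ, ∀ ρ ∈ Set.Ico (0 : ℝ) R,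
      HasDerivAt (fun ρ' => q t ρ') (qρ t ρ) ρ)
    (hqtc : ContinuousOn (fun p : ℝ × ℝ => qt p.1 p.2)
      (Set.Ioc (0 : ℝ) σ ×ˢ Set.Ico (0 : ℝ) R))
    (hqρc : ContinuousOn (fun p : ℝ × ℝ => qρ p.1 p.2)
      (Set.Ioc (0 : ℝ) σ ×ˢ Set.Ico (0 : ℝ) R))
    (ht₀ : t₀ ∈ Ioc 0 σ) (hs : 0 < s) (hys : y s ∈ Ioo 0 R) (hy : HasDerivAt y v s) :
    HasDerivAt (fun s => q (t₀ * Real.exp (-s)) (y s))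
      (-(t₀ * Real.exp (-s)) * qt (t₀ * Real.exp (-s)) (y s)
        + v * qρ (t₀ * Real.exp (-s)) (y s)) s := by
  set t := t₀ * Real.exp (-s) with ht
  have htσ : t ∈ Ioo 0 σ := by
    refine ⟨mul_pos ht₀.1 (Real.exp_pos _), lt_of_lt_of_le ?_ ht₀.2⟩
    exact mul_lt_of_lt_one_right ht₀.1 (Real.exp_lt_one_iff.2 (by linarith))
  have hnhds : Ioc (0 : ℝ) σ ×ˢ Ico (0 : ℝ) R ∈ 𝓝 (t, y s) :=
    prod_mem_nhds (Ioc_mem_nhds htσ.1 htσ.2) (Ico_mem_nhds hys.1 hys.2)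
  have key := hasStrictFDerivAt_uncurry_coprod (𝕜 := ℝ) (u := (t, y s)) (f := q)
    (f₁ := fun a b => ContinuousLinearMap.toSpanSingleton ℝ (qt a b))
    (f₂ := fun a b => ContinuousLinearMap.toSpanSingleton ℝ (qρ a b))
    (by filter_upwards [hnhds] with p hp using (hqt p.1 hp.1 p.2 hp.2).hasFDerivAt)
    (by filter_upwards [hnhds] with p hp using (hqρ p.1 hp.1 p.2 hp.2).hasFDerivAt)
    ((ContinuousLinearMap.toSpanSingletonCLE (𝕜 := ℝ) (E := ℝ)).continuous.continuousAt.comp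
      (hqtc.continuousAt hnhds))
    ((ContinuousLinearMap.toSpanSingletonCLE (𝕜 := ℝ) (E := ℝ)).continuous.continuousAt.comp
      (hqρc.continuousAt hnhds))
  have hexp : HasDerivAt (fun s => t₀ * Real.exp (-s)) (-t) s := by
    have := ((hasDerivAt_id s).neg.exp).const_mul t₀
    refine this.congr_deriv ?_
    simp [ht]
  have := key.hasFDerivAt.comp_hasDerivAt s (hexp.prodMk hy)
  refine this.congr_deriv ?_
  simp [Function.HasUncurry.uncurry]


/-! ### Global existence -/

/-- **Corollary 2 (global backward existence of characteristics).**  Under the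
differential inequality `t·∂q/∂t + h·q ≤ B·∂q/∂ρ` with `0 ≤ q ≤ r`,
`0 ≤ B ≤ C₁t^κ + C₂q + C₃q^{2/3} + C₄q^{1/3}`, `B` continuous, and the smallness
condition `(C₁/κ)σ^κ + (C₂/h)r + (3C₃/2h)r^{2/3} + (3C₄/h)r^{1/3} < R/2`, for every
`t₀ ∈ (0,σ]` and `ξ ∈ (0,R/2)` there is a solution `ρf` of `ρf′(t) = −B(t,ρf(t))/t`,
`ρf(t₀) = ξ`, with values in `(0,R)`, defined on all of `(0,t₀]`. -/
theorem characteristic_global_existence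
    (h κ C₁ C₂ C₃ C₄ σ R r : ℝ)
    (hh : 0 < h) (hκ0 : 0 < κ) (hκ1 : κ < 1)
    (hC₁ : 0 < C₁) (hC₂ : 0 < C₂) (hC₃ : 0 < C₃) (hC₄ : 0 < C₄)
    (hσ : 0 < σ) (hR : 0 < R) (hr : 0 ≤ r)
    (q qt qρ B : ℝ → ℝ → ℝ)
    (hqnn : ∀ t ∈ Set.Ioc (0 : ℝ) σ, ∀ ρ ∈ Set.Ico (0 : ℝ) R, 0 ≤ q t ρ)
    (hqr : ∀ t ∈ Set.Ioc (0 : ℝ) σ, ∀ ρ ∈ Set.Ico (0 : ℝ) R, q t ρ ≤ r)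
    (hqt : ∀ t ∈ Set.Ioc (0 : ℝ) σ, ∀ ρ ∈ Set.Ico (0 : ℝ) R,
      HasDerivAt (fun t' => q t' ρ) (qt t ρ) t)
    (hqρ : ∀ t ∈ Set.Ioc (0 : ℝ) σ, ∀ ρ ∈ Set.Ico (0 : ℝ) R,
      HasDerivAt (fun ρ' => q t ρ') (qρ t ρ) ρ)
    (hqtc : ContinuousOn (fun p : ℝ × ℝ => qt p.1 p.2)
      (Set.Ioc (0 : ℝ) σ ×ˢ Set.Ico (0 : ℝ) R))
    (hqρc : ContinuousOn (fun p : ℝ × ℝ => qρ p.1 p.2)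
      (Set.Ioc (0 : ℝ) σ ×ˢ Set.Ico (0 : ℝ) R))
    (hBc : ContinuousOn (fun p : ℝ × ℝ => B p.1 p.2)
      (Set.Ioc (0 : ℝ) σ ×ˢ Set.Ioo (0 : ℝ) R))
    (hBnn : ∀ t ∈ Set.Ioc (0 : ℝ) σ, ∀ ρ ∈ Set.Ioo (0 : ℝ) R, 0 ≤ B t ρ)
    (hBbd : ∀ t ∈ Set.Ioc (0 : ℝ) σ, ∀ ρ ∈ Set.Ioo (0 : ℝ) R,
      B t ρ ≤ C₁ * t ^ κ + C₂ * q t ρ + C₃ * (q t ρ) ^ ((2 : ℝ)/3)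
        + C₄ * (q t ρ) ^ ((1 : ℝ)/3))
    (hineq : ∀ t ∈ Set.Ioc (0 : ℝ) σ, ∀ ρ ∈ Set.Ioo (0 : ℝ) R,
      t * qt t ρ + h * q t ρ ≤ B t ρ * qρ t ρ)
    (hsmall : (C₁ / κ) * σ ^ κ + (C₂ / h) * r + (3 * C₃ / (2 * h)) * r ^ ((2 : ℝ)/3)
        + (3 * C₄ / h) * r ^ ((1 : ℝ)/3) < R / 2) :
    ∀ t₀ ∈ Set.Ioc (0 : ℝ) σ, ∀ ξ ∈ Set.Ioo (0 : ℝ) (R / 2),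
      ∃ ρf : ℝ → ℝ, ρf t₀ = ξ ∧
        ∀ t ∈ Set.Ioc (0 : ℝ) t₀, ρf t ∈ Set.Ioo (0 : ℝ) R ∧
          HasDerivAt ρf (-(B t (ρf t)) / t) t := by
  intro t₀ ht₀ ξ hξ
  set R₁ := ξ + R / 2 with hR₁
  have hξR₁ : ξ < R₁ := by linarith
  have hR₁R : R₁ < R := by linarith [hξ.2]
  let F : ℝ → ℝ → ℝ := fun s y => B (t₀ * Real.exp (-max s 0)) (max ξ (min y R₁))
  have htm : ∀ s : ℝ, 0 ≤ s → t₀ * Real.exp (-s) ∈ Ioc 0 σ := fun s hs =>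
    ⟨mul_pos ht₀.1 (Real.exp_pos _),
      (mul_le_of_le_one_right ht₀.1.le (Real.exp_le_one_iff.2 (by linarith))).trans ht₀.2⟩
  have hclamp : ∀ y : ℝ, max ξ (min y R₁) ∈ Ioo 0 R := fun y =>
    ⟨hξ.1.trans_le (le_max_left _ _),
      max_lt (hξR₁.trans hR₁R) ((min_le_right _ _).trans_lt hR₁R)⟩
  have hF0 : ∀ s y, 0 ≤ F s y := fun s y => hBnn _ (htm _ (le_max_right _ _)) _ (hclamp y)
  have hFc : Continuous fun p : ℝ × ℝ => F p.1 p.2 :=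
    hBc.comp_continuous (f := fun p : ℝ × ℝ =>
        (t₀ * Real.exp (-max p.1 0), max ξ (min p.2 R₁))) (by fun_prop)
      fun p => ⟨htm _ (le_max_right _ _), hclamp p.2⟩
  have hFM : ∀ s y, |F s y| ≤ C₁ * σ ^ κ + C₂ * r + C₃ * r ^ ((2 : ℝ)/3)
      + C₄ * r ^ ((1 : ℝ)/3) := by
    intro s y
    rw [abs_of_nonneg (hF0 s y)]
    have h1 := htm _ (le_max_right s 0)
    have h2 := Ioo_subset_Ico_self (hclamp y)
    have h3 := hqnn _ h1 _ h2
    have h4 := hqr _ h1 _ h2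
    refine (hBbd _ h1 _ (hclamp y)).trans ?_
    have h5 := h1.1.le
    have h6 := h1.2
    gcongr
  obtain ⟨y, hy0, hy⟩ := peano hFM hFc ξ
  have hyc : ContinuousOn y (Ici 0) := fun s hs => (hy s hs).continuousAt.continuousWithinAt
  have hymono : MonotoneOn y (Ici 0) := by
    refine monotoneOn_of_deriv_nonneg (convex_Ici 0) hyc
      (fun s hs => (hy s (interior_subset hs)).differentiableAt.differentiableWithinAt) ?_
    intro s hs
    rw [(hy s (interior_subset hs)).deriv]
    exact hF0 _ _
  have hyξ : ∀ s, 0 ≤ s → ξ ≤ y s := fun s hs => by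
    rw [← hy0]; exact hymono (mem_Ici.2 le_rfl) hs hs
  -- As long as `y ≤ R₁`, the truncation is inactive and `y` solves the original equation.
  have hFB : ∀ s, 0 ≤ s → y s ≤ R₁ → F s (y s) = B (t₀ * Real.exp (-s)) (y s) := by
    intro s hs hsR
    simp only [F]
    rw [max_eq_left hs, min_eq_left hsR, max_eq_right (hyξ s hs)]
  have hyR : ∀ s, 0 ≤ s → y s < R₁ := by
    intro s hs
    by_contra! hcon
    obtain ⟨s₁, hs₁, hys₁⟩ := intermediate_value_Icc hs (hyc.mono Icc_subset_Ici_self)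
      (show R₁ ∈ Icc (y 0) (y s) from ⟨by rw [hy0]; exact hξR₁.le, hcon⟩)
    have hle : ∀ x ∈ Icc 0 s₁, y x ≤ R₁ := fun x hx => by
      rw [← hys₁]; exact hymono (mem_Ici.2 hx.1) (mem_Ici.2 hs₁.1) hx.2
    have hin : ∀ x ∈ Icc 0 s₁, y x ∈ Ioo 0 R := fun x hx =>
      ⟨hξ.1.trans_le (hyξ x hx.1), (hle x hx).trans_lt hR₁R⟩
    have hyB : ∀ x ∈ Icc 0 s₁, HasDerivAt y (B (t₀ * Real.exp (-x)) (y x)) x := fun x hx => by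
      rw [← hFB x hx.1 (hle x hx)]; exact hy x hx.1
    have hdisp := displacement_bound hh hκ0 hC₁ hC₂ hC₃ hC₄ ht₀.1 hr hs₁.1
      (y' := fun x => B (t₀ * Real.exp (-x)) (y x))
      (Q := fun x => q (t₀ * Real.exp (-x)) (y x))
      (hyc.mono Icc_subset_Ici_self)
      (fun x hx => hyB x (Ioo_subset_Icc_self hx))
      (fun x hx => hasDerivAt_along hqt hqρ hqtc hqρc ht₀ hx.1 (hin x (Ioc_subset_Icc_self hx))
        (hyB x (Ioc_subset_Icc_self hx)))
      (fun x hx => by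
        have := hineq _ (htm x hx.1.le) _ (hin x (Ioc_subset_Icc_self hx))
        linarith)
      (fun x hx => hqnn _ (htm x hx.1.le) _
        (Ioo_subset_Ico_self (hin x (Ioc_subset_Icc_self hx))))
      (fun x hx => hqr _ (htm x hx.1.le) _
        (Ioo_subset_Ico_self (hin x (Ioc_subset_Icc_self hx))))
      (fun x hx => hBbd _ (htm x hx.1.le) _ (hin x (Ioo_subset_Icc_self hx)))
    have hpow : C₁ / κ * t₀ ^ κ ≤ C₁ / κ * σ ^ κ :=
      mul_le_mul_of_nonneg_left (Real.rpow_le_rpow ht₀.1.le ht₀.2 hκ0.le) (by positivity)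
    rw [hys₁, hy0] at hdisp
    linarith
  refine ⟨fun t => y (Real.log (t₀ / t)), by simp [div_self ht₀.1.ne', hy0], ?_⟩
  intro t ht
  have ht0 : 0 < t := ht.1
  have hs : 0 ≤ Real.log (t₀ / t) := Real.log_nonneg ((one_le_div ht0).2 ht.2)
  have hback : t₀ * Real.exp (-Real.log (t₀ / t)) = t := by
    rw [Real.exp_neg, Real.exp_log (div_pos ht₀.1 ht0)]
    field_simp [ht₀.1.ne']
  refine ⟨⟨hξ.1.trans_le (hyξ _ hs), (hyR _ hs).trans hR₁R⟩, ?_⟩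
  have hlog : HasDerivAt (fun t => Real.log (t₀ / t)) (-1 / t) t := by
    have h1 := ((hasDerivAt_inv ht0.ne').const_mul t₀).log
      (mul_pos ht₀.1 (inv_pos.2 ht0)).ne'
    have h2 := ht₀.1.ne'
    simp only [div_eq_mul_inv]
    refine h1.congr_deriv ?_
    field_simp
  have h1 := (hy _ hs).comp t hlog
  rw [hFB _ hs (hyR _ hs).le, hback] at h1
  refine h1.congr_deriv ?_
  ring
end

section
/- Let h > 0, 0 < κ < 1, C₁, C₂, C₃, C₄ > 0, σ₀ > 0, R₀ > 0. Let q : (0,σ₀] × [0,R₀] → [0,∞) be continuously differentiable and B : (0,σ₀] × [0,R₀] → [0,∞) continuous, satisfying on (0,σ₀] × (0,R₀): t·∂q/∂t + h·q ≤ B·∂q/∂ρ and B ≤ C₁t^κ + C₂q + C₃q^{2/3} + C₄q^{1/3}. Suppose there exist σ ∈ (0,σ₀] and R ∈ (0,R₀] such that r := sup{q(t,ρ) : t ∈ (0,σ], ρ ∈ [0,R]} is finite and (C₁/κ)σ^κ + (C₂/h)r + (3C₃/(2h))r^{2/3} + (3C₄/h)r^{1/3} < R/2. Then q(t,ρ)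 = 0 for all (t,ρ) ∈ (0,σ] × [0,R/2). -/
/-!
The inequality says that `t ^ h * q` does not increase along the backward characteristics
`ρ' = -B / t`.  These move to larger `ρ` as `t` decreases, and the smallness condition keeps them
in `ρ < R` down to `t = 0`, where `t ^ h * q` vanishes.

Since `B` is merely continuous, the existence of characteristics would need Peano's theorem.  The
proof replaces them by a comparison argument.  For `0 < t₁ < t₀`, compare `q` with the barrier
`φ t = r' * (t₁ / t) ^ h'`, where `r' > r` and `h' < h`, on the region `t₁ ≤ t ≤ t₀`,
`ξ ≤ ρ ≤ g t`.  The right boundary `g` travels at the maximal speed compatible with `q ≤ φ`, that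
is `g' = -b / t` with `b = C₁' t ^ κ + C₂ φ + C₃ φ ^ (2/3) + C₄ φ ^ (1/3)` and `C₁' > C₁`.
At a first time at which `q` reaches `φ`, one has `B < b`, so the backward direction `(-1, B / t)`
points into the region, and the differential inequality says that `q - φ` strictly increases in
that direction; this contradicts `q < φ` at earlier times (`lt_barrier`).
The smallness condition gives `g > R / 2`, hence `q t₀ ξ ≤ r' * (t₁ / t₀) ^ h'` for every
`ξ ∈ (0, R / 2)`, and `t₁ → 0` gives `q t₀ ξ = 0`.  The case `ξ = 0` follows by continuity.
-/

open Filter Topology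

lemma eventually_gt_of_hasDerivWithinAt_pos {f : ℝ → ℝ} {d : ℝ}
    (hf : HasDerivWithinAt f d (Set.Ici 0) 0) (hd : 0 < d) : ∀ᶠ s in 𝓝[>] (0 : ℝ), f 0 < f s := by
  have h1 := (hasDerivWithinAt_iff_tendsto_slope' (by simp)).1
    (hf.mono Set.Ioi_subset_Ici_self)
  filter_upwards [h1.eventually (lt_mem_nhds hd), self_mem_nhdsWithin] with s hs hs0
  have hs0 : (0 : ℝ) < s := hs0
  rw [slope_def_field, sub_zero] at hs
  have := (div_pos_iff_of_pos_right hs0).1 hs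
  linarith

/-- Chain rule along the ray `s ↦ (t - s, ρ + c * s)`.  Only one-sided data in `t` are used, since
`t` may be the last time at which the partial derivatives are controlled. -/
lemma hasDerivWithinAt_ray {q qρ : ℝ → ℝ → ℝ} {a σ R t ρ c qt : ℝ} (hta : a < t) (htσ : t ≤ σ)
    (hρ0 : 0 < ρ) (hρR : ρ < R) (hc : 0 ≤ c)
    (hqt : HasDerivAt (fun t' => q t' ρ) qt t)
    (hqρ : ∀ t ∈ Set.Ioc a σ, ∀ ρ ∈ Set.Ico (0 : ℝ) R,
      HasDerivAt (fun ρ' => q t ρ') (qρ t ρ) ρ)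
    (hqρc : ContinuousOn (fun p : ℝ × ℝ => qρ p.1 p.2) (Set.Ioc a σ ×ˢ Set.Ico (0 : ℝ) R)) :
    HasDerivWithinAt (fun s => q (t - s) (ρ + c * s)) (-qt + c * qρ t ρ) (Set.Ici 0) 0 := by
  -- split into the increment in `t`, differentiable by assumption, and the increment in `ρ`,
  -- which the mean value theorem expresses through values of `qρ` near `(t, ρ)`
  have h1 : HasDerivWithinAt (fun s => q (t - s) ρ) (-qt) (Set.Ici 0) 0 := by
    have e : HasDerivAt (fun s : ℝ => t - s) (-1) 0 := by
      simpa using (hasDerivAt_id (0 : ℝ)).const_sub t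
    have e2 : HasDerivAt (fun t' => q t' ρ) qt (t - 0) := by simpa using hqt
    have := e2.comp (0 : ℝ) e
    simpa [Function.comp_def] using this.hasDerivWithinAt
  have h2 : HasDerivWithinAt (fun s => q (t - s) (ρ + c * s) - q (t - s) ρ) (c * qρ t ρ)
      (Set.Ici 0) 0 := by
    rw [← hasDerivWithinAt_Ioi_iff_Ici, hasDerivWithinAt_iff_tendsto_slope' (by simp)]
    have hmv : ∀ᶠ s in 𝓝[>] (0 : ℝ), ∃ θ ∈ Set.Icc ρ (ρ + c * s), ρ + c * s < R ∧ 0 < s ∧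
        a < t - s ∧ q (t - s) (ρ + c * s) - q (t - s) ρ = c * s * qρ (t - s) θ := by
      have e1 : ∀ᶠ s in 𝓝[>] (0 : ℝ), ρ + c * s < R := by
        have : ContinuousAt (fun s : ℝ => ρ + c * s) 0 := by fun_prop
        exact (this.eventually (gt_mem_nhds (by simpa using hρR))).filter_mono nhdsWithin_le_nhds
      have e2 : ∀ᶠ s in 𝓝[>] (0 : ℝ), a < t - s := by
        have : ContinuousAt (fun s : ℝ => t - s) 0 := by fun_prop
        exact (this.eventually (lt_mem_nhds (by simpa using hta))).filter_mono nhdsWithin_le_nhds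
      filter_upwards [e1, e2, self_mem_nhdsWithin] with s hs1 hs2 hs0
      have hs0 : 0 < s := hs0
      rcases hc.eq_or_lt with rfl | hc
      · exact ⟨ρ, by simp, hs1, hs0, hs2, by simp⟩
      have hcs : 0 < c * s := mul_pos hc hs0
      have hd : ∀ x ∈ Set.Icc ρ (ρ + c * s),
          HasDerivAt (fun ρ' => q (t - s) ρ') (qρ (t - s) x) x := fun x hx =>
        hqρ (t - s) ⟨hs2, by linarith⟩ x ⟨by linarith [hx.1], by linarith [hx.2]⟩
      obtain ⟨θ, hθ, e⟩ := exists_hasDerivAt_eq_slope (fun ρ' => q (t - s) ρ') (qρ (t - s))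
        (show ρ < ρ + c * s by linarith)
        (fun x hx => (hd x hx).continuousAt.continuousWithinAt)
        (fun x hx => hd x (Set.Ioo_subset_Icc_self hx))
      refine ⟨θ, Set.Ioo_subset_Icc_self hθ, hs1, hs0, hs2, ?_⟩
      rw [e]
      field_simp
      ring
    rw [Metric.tendsto_nhds]
    intro ε hε
    have hcont := hqρc (t, ρ) ⟨⟨hta, htσ⟩, ⟨hρ0.le, hρR⟩⟩
    rw [Metric.continuousWithinAt_iff] at hcont
    obtain ⟨δ, hδ, hδ'⟩ := hcont (ε / (c + 1)) (by positivity)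
    have e3 : ∀ᶠ s in 𝓝[>] (0 : ℝ), (c + 1) * s < δ := by
      have : ContinuousAt (fun s : ℝ => (c + 1) * s) 0 := by fun_prop
      exact (this.eventually (gt_mem_nhds (by simpa using hδ))).filter_mono nhdsWithin_le_nhds
    filter_upwards [hmv, e3] with s ⟨θ, hθ, hs1, hs0, hs2, e⟩ hs3
    have hcs : 0 ≤ c * s := by positivity
    have h3 := @hδ' (t - s, θ) ⟨⟨hs2, by simp; linarith⟩, ⟨by simp; linarith [hθ.1],
      by simp; linarith [hθ.2]⟩⟩ (by
        rw [Prod.dist_eq, Real.dist_eq, Real.dist_eq, max_lt_iff, abs_lt, abs_lt]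
        simp only
        obtain ⟨hθ1, hθ2⟩ := hθ
        refine ⟨⟨by nlinarith, by nlinarith⟩, ⟨by nlinarith, by nlinarith⟩⟩)
    rw [slope_def_field]
    simp only [mul_zero, add_zero, sub_zero, sub_self]
    rw [e, Real.dist_eq]
    rw [Real.dist_eq] at h3
    have e4 : c * s * qρ (t - s) θ / s - c * qρ t ρ = c * (qρ (t - s) θ - qρ t ρ) := by
      field_simp
    rw [e4, abs_mul, abs_of_nonneg hc]
    rw [lt_div_iff₀ (by positivity)] at h3
    have h4 : 0 ≤ |qρ (t - s) θ - qρ t ρ| := abs_nonneg _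
    rcases h4.eq_or_lt with h5 | h5
    · rw [← h5]; simpa using hε
    · simp only at h3
      nlinarith
  have := h1.add h2
  refine this.congr_of_eventuallyEq (Eventually.of_forall fun s => ?_) ?_ <;> simp

/-- Comparison with a barrier `φ` decaying like `t ^ (-h')`, `h' < h`, on the region
`ξ ≤ ρ ≤ g t`, whose right boundary recedes at speed `b / t`, faster than `B / t` as long as
`q ≤ φ`. -/
lemma lt_barrier {q qt qρ B : ℝ → ℝ → ℝ} {φ g b : ℝ → ℝ} {h h' t₁ t₀ ξ R : ℝ}
    (hh : h' < h) (ht₁ : 0 < t₁) (ht : t₁ < t₀) (hξ : 0 < ξ)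
    (hqt : ∀ t ∈ Set.Ioc (0 : ℝ) t₀, ∀ ρ ∈ Set.Ico (0 : ℝ) R,
      HasDerivAt (fun t' => q t' ρ) (qt t ρ) t)
    (hqρ : ∀ t ∈ Set.Ioc (0 : ℝ) t₀, ∀ ρ ∈ Set.Ico (0 : ℝ) R,
      HasDerivAt (fun ρ' => q t ρ') (qρ t ρ) ρ)
    (hqρc : ContinuousOn (fun p : ℝ × ℝ => qρ p.1 p.2)
      (Set.Ioc (0 : ℝ) t₀ ×ˢ Set.Ico (0 : ℝ) R))
    (hqc : ContinuousOn (fun p : ℝ × ℝ => q p.1 p.2)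
      (Set.Ioc (0 : ℝ) t₀ ×ˢ Set.Icc (0 : ℝ) R))
    (hBnn : ∀ t ∈ Set.Ioc (0 : ℝ) t₀, ∀ ρ ∈ Set.Ioo (0 : ℝ) R, 0 ≤ B t ρ)
    (hineq : ∀ t ∈ Set.Ioc (0 : ℝ) t₀, ∀ ρ ∈ Set.Ioo (0 : ℝ) R,
      t * qt t ρ + h * q t ρ ≤ B t ρ * qρ t ρ)
    (hφ : ∀ t, 0 < t → HasDerivAt φ (-(h' * φ t / t)) t) (hφ0 : ∀ t, 0 < t → 0 < φ t)
    (hg : ∀ t, 0 < t → HasDerivAt g (-(b t / t)) t)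
    (hgR : ∀ t ∈ Set.Icc t₁ t₀, g t < R)
    (hb : ∀ t ∈ Set.Icc t₁ t₀, 0 < b t)
    (hBb : ∀ t ∈ Set.Icc t₁ t₀, ∀ ρ ∈ Set.Ioo (0 : ℝ) R, q t ρ ≤ φ t → B t ρ < b t)
    (hini : ∀ ρ ∈ Set.Icc (0 : ℝ) R, q t₁ ρ < φ t₁)
    (hξg : ξ ≤ g t₀) : q t₀ ξ < φ t₀ := by
  by_contra! hcon
  set D : Set (ℝ × ℝ) := Set.Icc t₁ t₀ ×ˢ Set.Icc ξ R with hD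
  have hDc : IsCompact D := isCompact_Icc.prod isCompact_Icc
  set S : Set (ℝ × ℝ) := D ∩ (fun p : ℝ × ℝ => (g p.1 - p.2, q p.1 p.2 - φ p.1)) ⁻¹'
    (Set.Ici 0 ×ˢ Set.Ici 0) with hS
  have hfst : ∀ p ∈ D, 0 < p.1 := fun p hp => ht₁.trans_le hp.1.1
  have hcont : ContinuousOn (fun p : ℝ × ℝ => (g p.1 - p.2, q p.1 p.2 - φ p.1)) D := by
    have c1 : ContinuousOn (fun p : ℝ × ℝ => g p.1) D := fun p hp =>
      ((hg p.1 (hfst p hp)).continuousAt.comp continuousAt_fst).continuousWithinAt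
    have c2 : ContinuousOn (fun p : ℝ × ℝ => φ p.1) D := fun p hp =>
      ((hφ p.1 (hfst p hp)).continuousAt.comp continuousAt_fst).continuousWithinAt
    have c3 : ContinuousOn (fun p : ℝ × ℝ => q p.1 p.2) D := hqc.mono fun p hp =>
      ⟨⟨hfst p hp, hp.1.2⟩, ⟨hξ.le.trans hp.2.1, hp.2.2⟩⟩
    exact (c1.sub continuous_snd.continuousOn).prodMk (c3.sub c2)
  have hSc : IsCompact S := by
    have := hcont.preimage_isClosed_of_isClosed hDc.isClosed
      ((isClosed_Ici (a := (0 : ℝ))).prod (isClosed_Ici (a := (0 : ℝ))))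
    exact hDc.of_isClosed_subset this Set.inter_subset_left
  have hmem : (t₀, ξ) ∈ S := by
    refine ⟨⟨⟨ht.le, le_rfl⟩, ⟨le_rfl, ?_⟩⟩, ?_, ?_⟩
    · exact hξg.trans (hgR t₀ ⟨ht.le, le_rfl⟩).le
    · simpa using hξg
    · simpa using hcon
  obtain ⟨⟨t, ρ⟩, hp, hmin⟩ := hSc.exists_isMinOn ⟨_, hmem⟩ continuous_fst.continuousOn
  obtain ⟨⟨⟨htl, htu⟩, ⟨hρl, hρu⟩⟩, hgρ, hqφ⟩ := hp
  simp only [Set.mem_Ici, sub_nonneg] at htl htu hρl hρu hgρ hqφ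
  have ht0 : 0 < t := ht₁.trans_le htl
  have hρ0 : 0 < ρ := hξ.trans_le hρl
  have hρR : ρ < R := hgρ.trans_lt (hgR t ⟨htl, htu⟩)
  have htl' : t₁ < t := by
    rcases htl.eq_or_lt with rfl | h1
    · exact absurd (hini ρ ⟨hρ0.le, hρu⟩) (not_lt.2 hqφ)
    · exact h1
  have hsub : HasDerivAt (fun s : ℝ => t - s) (-1) 0 := by
    simpa using (hasDerivAt_id (0 : ℝ)).const_sub t
  -- directions `(-1, c)` with slope `c` below the speed of `g` lead to points where `q < φ`
  have key : ∀ c, 0 ≤ c → c < b t / t →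
      ∀ᶠ s in 𝓝[>] (0 : ℝ), q (t - s) (ρ + c * s) < φ (t - s) := by
    intro c hc hcb
    have hk : HasDerivWithinAt (fun s => g (t - s) - (ρ + c * s)) (b t / t - c)
        (Set.Ici 0) 0 := by
      have e2 : HasDerivAt g (-(b t / t)) (t - 0) := by simpa using hg t ht0
      have e3 : HasDerivAt (fun s : ℝ => ρ + c * s) c 0 := by
        simpa using ((hasDerivAt_id (0 : ℝ)).const_mul c).const_add ρ
      have := (e2.comp (0 : ℝ) hsub).sub e3
      exact (this.congr_deriv (by ring)).hasDerivWithinAt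
    have e2 : ∀ᶠ s in 𝓝[>] (0 : ℝ), t₁ < t - s := by
      have : ContinuousAt (fun s : ℝ => t - s) 0 := by fun_prop
      exact (this.eventually (lt_mem_nhds (by simpa using htl'))).filter_mono nhdsWithin_le_nhds
    filter_upwards [eventually_gt_of_hasDerivWithinAt_pos hk (by linarith), e2,
      self_mem_nhdsWithin] with s hs1 hs2 hs0
    have hs0 : 0 < s := hs0
    simp only [sub_zero, mul_zero, add_zero] at hs1
    by_contra! hs3
    have hgs := hgR (t - s) ⟨hs2.le, by linarith⟩
    have hcs : 0 ≤ c * s := by positivity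
    have : (t - s, ρ + c * s) ∈ S := by
      refine ⟨⟨⟨hs2.le, ?_⟩, ⟨?_, ?_⟩⟩, ?_, ?_⟩ <;>
        simp only [Set.mem_Ici] <;> linarith
    have := hmin this
    simp only [Set.mem_ofPred_eq] at this
    linarith
  have hφs : HasDerivAt (fun s => φ (t - s)) (h' * φ t / t) 0 := by
    have e2 : HasDerivAt φ (-(h' * φ t / t)) (t - 0) := by simpa using hφ t ht0
    simpa [Function.comp_def] using e2.comp (0 : ℝ) hsub
  have hray := fun c (hc : 0 ≤ c) =>
    hasDerivWithinAt_ray ht0 htu hρ0 hρR hc (hqt t ⟨ht0, htu⟩ ρ ⟨hρ0.le, hρR⟩) hqρ hqρc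
  -- the direction `c = 0` shows that `q` does not jump above `φ` at the first contact
  have hle : q t ρ ≤ φ t := by
    have k0 := key 0 le_rfl (div_pos (hb t ⟨htl, htu⟩) ht0)
    have c1 := (hray 0 le_rfl).continuousWithinAt.mono Set.Ioi_subset_Ici_self
    have c2 : ContinuousWithinAt (fun s => φ (t - s)) (Set.Ioi 0) 0 :=
      hφs.continuousAt.continuousWithinAt
    have := le_of_tendsto_of_tendsto c1 c2 (k0.mono fun s hs => hs.le)
    simpa using this
  have hB0 := hBnn t ⟨ht0, htu⟩ ρ ⟨hρ0, hρR⟩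
  have hBt : 0 ≤ B t ρ / t := div_nonneg hB0 ht0.le
  have kB := key (B t ρ / t) hBt
    (div_lt_div_of_pos_right (hBb t ⟨htl, htu⟩ ρ ⟨hρ0, hρR⟩ hle) ht0)
  have hd := (hray _ hBt).sub hφs.hasDerivWithinAt
  have hpos : 0 < -qt t ρ + B t ρ / t * qρ t ρ - h' * φ t / t := by
    have e : -qt t ρ + B t ρ / t * qρ t ρ - h' * φ t / t
        = (B t ρ * qρ t ρ - t * qt t ρ - h' * φ t) / t := by
      field_simp
      ring
    rw [e]
    refine div_pos ?_ ht0
    have h1 := hineq t ⟨ht0, htu⟩ ρ ⟨hρ0, hρR⟩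
    have h2 : q t ρ = φ t := le_antisymm hle hqφ
    rw [h2] at h1
    nlinarith [hφ0 t ht0]
  obtain ⟨s, hs1, hs2⟩ := ((eventually_gt_of_hasDerivWithinAt_pos hd hpos).and kB).exists
  simp only [Pi.sub_apply, sub_zero, mul_zero, add_zero] at hs1
  linarith


/-- **Proposition 1 (core of the uniqueness proof).**  Let `q ≥ 0` be continuously
differentiable on `(0,σ₀] × [0,R₀]` and `B ≥ 0` continuous, with
`t·∂q/∂t + h·q ≤ B·∂q/∂ρ` and `B ≤ C₁t^κ + C₂q + C₃q^{2/3} + C₄q^{1/3}` on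
`(0,σ₀] × (0,R₀)`.  If for some `σ ∈ (0,σ₀]`, `R ∈ (0,R₀]` the supremum
`r` of `q` over `(0,σ] × [0,R]` is finite and satisfies
`(C₁/κ)σ^κ + (C₂/h)r + (3C₃/2h)r^{2/3} + (3C₄/h)r^{1/3} < R/2`, then `q ≡ 0` on
`(0,σ] × [0,R/2)`. -/
theorem q_vanishes
    (h κ C₁ C₂ C₃ C₄ σ₀ R₀ : ℝ)
    (hh : 0 < h) (hκ0 : 0 < κ) (hκ1 : κ < 1)
    (hC₁ : 0 < C₁) (hC₂ : 0 < C₂) (hC₃ : 0 < C₃) (hC₄ : 0 < C₄)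
    (hσ₀ : 0 < σ₀) (hR₀ : 0 < R₀)
    (q qt qρ B : ℝ → ℝ → ℝ)
    (hqnn : ∀ t ∈ Set.Ioc (0 : ℝ) σ₀, ∀ ρ ∈ Set.Icc (0 : ℝ) R₀, 0 ≤ q t ρ)
    (hqt : ∀ t ∈ Set.Ioc (0 : ℝ) σ₀, ∀ ρ ∈ Set.Ico (0 : ℝ) R₀,
      HasDerivAt (fun t' => q t' ρ) (qt t ρ) t)
    (hqρ : ∀ t ∈ Set.Ioc (0 : ℝ) σ₀, ∀ ρ ∈ Set.Ico (0 : ℝ) R₀,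
      HasDerivAt (fun ρ' => q t ρ') (qρ t ρ) ρ)
    (hqtc : ContinuousOn (fun p : ℝ × ℝ => qt p.1 p.2)
      (Set.Ioc (0 : ℝ) σ₀ ×ˢ Set.Ico (0 : ℝ) R₀))
    (hqρc : ContinuousOn (fun p : ℝ × ℝ => qρ p.1 p.2)
      (Set.Ioc (0 : ℝ) σ₀ ×ˢ Set.Ico (0 : ℝ) R₀))
    (hqc : ContinuousOn (fun p : ℝ × ℝ => q p.1 p.2)
      (Set.Ioc (0 : ℝ) σ₀ ×ˢ Set.Icc (0 : ℝ) R₀))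
    (hBc : ContinuousOn (fun p : ℝ × ℝ => B p.1 p.2)
      (Set.Ioc (0 : ℝ) σ₀ ×ˢ Set.Icc (0 : ℝ) R₀))
    (hBnn : ∀ t ∈ Set.Ioc (0 : ℝ) σ₀, ∀ ρ ∈ Set.Icc (0 : ℝ) R₀, 0 ≤ B t ρ)
    (hBbd : ∀ t ∈ Set.Ioc (0 : ℝ) σ₀, ∀ ρ ∈ Set.Ioo (0 : ℝ) R₀,
      B t ρ ≤ C₁ * t ^ κ + C₂ * q t ρ + C₃ * (q t ρ) ^ ((2 : ℝ)/3)
        + C₄ * (q t ρ) ^ ((1 : ℝ)/3))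
    (hineq : ∀ t ∈ Set.Ioc (0 : ℝ) σ₀, ∀ ρ ∈ Set.Ioo (0 : ℝ) R₀,
      t * qt t ρ + h * q t ρ ≤ B t ρ * qρ t ρ) :
    ∀ σ R r : ℝ, 0 < σ → σ ≤ σ₀ → 0 < R → R ≤ R₀ →
      (∀ t ∈ Set.Ioc (0 : ℝ) σ, ∀ ρ ∈ Set.Icc (0 : ℝ) R, q t ρ ≤ r) →
      (C₁ / κ) * σ ^ κ + (C₂ / h) * r + (3 * C₃ / (2 * h)) * r ^ ((2 : ℝ)/3)
          + (3 * C₄ / h) * r ^ ((1 : ℝ)/3) < R / 2 →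
      ∀ t ∈ Set.Ioc (0 : ℝ) σ, ∀ ρ ∈ Set.Ico (0 : ℝ) (R / 2), q t ρ = 0 := by
  intro σ R r hσ hσσ hR hRR hr hsmall
  have hr0 : 0 ≤ r := (hqnn σ ⟨hσ, hσσ⟩ 0 ⟨le_rfl, hR₀.le⟩).trans
    (hr σ ⟨hσ, le_rfl⟩ 0 ⟨le_rfl, hR.le⟩)
  -- the smallness condition is open, so it leaves room to enlarge `C₁` and `r` and to decrease `h`
  obtain ⟨η, hη0, hηh, hη⟩ : ∃ η > 0, η < h ∧
      ((C₁ + η) / κ) * σ ^ κ + (C₂ / (h - η)) * (r + η)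
        + (3 * C₃ / (2 * (h - η))) * (r + η) ^ ((2 : ℝ)/3)
        + (3 * C₄ / (h - η)) * (r + η) ^ ((1 : ℝ)/3) < R / 2 := by
    have hc : ContinuousAt (fun η : ℝ => ((C₁ + η) / κ) * σ ^ κ + (C₂ / (h - η)) * (r + η)
        + (3 * C₃ / (2 * (h - η))) * (r + η) ^ ((2 : ℝ)/3)
        + (3 * C₄ / (h - η)) * (r + η) ^ ((1 : ℝ)/3)) 0 := by
      have p1 : ContinuousAt (fun η : ℝ => (r + η) ^ ((2 : ℝ)/3)) 0 :=
        ContinuousAt.rpow_const (by fun_prop) (Or.inr (by norm_num))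
      have p2 : ContinuousAt (fun η : ℝ => (r + η) ^ ((1 : ℝ)/3)) 0 :=
        ContinuousAt.rpow_const (by fun_prop) (Or.inr (by norm_num))
      have d1 : ContinuousAt (fun η : ℝ => C₂ / (h - η)) 0 :=
        ContinuousAt.div (by fun_prop) (by fun_prop) (by simpa using hh.ne')
      have d2 : ContinuousAt (fun η : ℝ => 3 * C₃ / (2 * (h - η))) 0 :=
        ContinuousAt.div (by fun_prop) (by fun_prop) (by simpa using hh.ne')
      have d3 : ContinuousAt (fun η : ℝ => 3 * C₄ / (h - η)) 0 :=
        ContinuousAt.div (by fun_prop) (by fun_prop) (by simpa using hh.ne')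
      fun_prop
    have e1 := (hc.eventually (Iio_mem_nhds (show _ < R / 2 by simpa using hsmall))).filter_mono
      (nhdsWithin_le_nhds (s := Set.Ioi 0))
    have e2 : ∀ᶠ η in 𝓝[>] (0 : ℝ), η < h := (gt_mem_nhds hh).filter_mono nhdsWithin_le_nhds
    obtain ⟨η, ⟨h1, h2⟩, h3⟩ := ((e1.and e2).and self_mem_nhdsWithin).exists
    exact ⟨η, h3, h2, h1⟩
  set h' := h - η with hh'
  set r' := r + η with hr'
  have hh'0 : 0 < h' := by linarith
  have hr'0 : 0 < r' := by linarith
  have hbound : ∀ t₀ ∈ Set.Ioc (0 : ℝ) σ, ∀ ξ ∈ Set.Ioo (0 : ℝ) (R / 2), ∀ t₁ ∈ Set.Ioo 0 t₀,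
      q t₀ ξ < r' * (t₁ / t₀) ^ h' := by
    rintro t₀ ⟨ht₀, ht₀σ⟩ ξ ⟨hξ0, hξR⟩ t₁ ⟨ht₁, ht₁₀⟩
    have hsub : Set.Ioc (0 : ℝ) t₀ ⊆ Set.Ioc 0 σ₀ :=
      Set.Ioc_subset_Ioc_right (ht₀σ.trans hσσ)
    have hsubR : Set.Ico (0 : ℝ) R ⊆ Set.Ico 0 R₀ := Set.Ico_subset_Ico_right hRR
    have hsubR' : Set.Ioo (0 : ℝ) R ⊆ Set.Ioo 0 R₀ := Set.Ioo_subset_Ioo_right hRR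
    set φ : ℝ → ℝ := fun t => r' * (t₁ / t) ^ h' with hφdef
    have hφ0 : ∀ t, 0 < t → 0 < φ t := fun t ht => by simp only [hφdef]; positivity
    have hφr : ∀ t ∈ Set.Icc t₁ t₀, φ t ≤ r' := fun t ht => by
      have ht' : 0 < t := ht₁.trans_le ht.1
      have : (t₁ / t) ^ h' ≤ 1 :=
        Real.rpow_le_one (by positivity) ((div_le_one ht').2 ht.1) hh'0.le
      simpa [hφdef] using mul_le_mul_of_nonneg_left this hr'0.le
    have hφ : ∀ t, 0 < t → HasDerivAt φ (-(h' * φ t / t)) t := by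
      intro t ht
      have e1 : HasDerivAt (fun t : ℝ => t₁ / t) (-(t₁ / t ^ 2)) t := by
        simpa [div_eq_mul_inv] using (hasDerivAt_inv ht.ne').const_mul t₁
      have hpos : 0 < t₁ / t := by positivity
      have e2 := (e1.rpow_const (p := h') (Or.inl hpos.ne')).const_mul r'
      refine e2.congr_deriv ?_
      simp only [hφdef]
      rw [Real.rpow_sub_one hpos.ne']
      field_simp
    have hφp : ∀ p t : ℝ, 0 < t →
        HasDerivAt (fun t => φ t ^ p) (-(p * h' * φ t ^ p / t)) t := by
      intro p t ht
      refine ((hφ t ht).rpow_const (p := p) (Or.inl (hφ0 t ht).ne')).congr_deriv ?_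
      have := hφ0 t ht
      rw [Real.rpow_sub_one this.ne']
      field_simp
    -- the explicit solution of `g' = -b / t`, normalised by `g t₁ = R - (C₁ + η) / κ * t₁ ^ κ`
    set K := (C₂ / h') * r' + (3 * C₃ / (2 * h')) * r' ^ ((2 : ℝ)/3)
        + (3 * C₄ / h') * r' ^ ((1 : ℝ)/3) with hK
    set g : ℝ → ℝ := fun t => R - K + (C₂ / h') * φ t
      + (3 * C₃ / (2 * h')) * φ t ^ ((2 : ℝ)/3)
      + (3 * C₄ / h') * φ t ^ ((1 : ℝ)/3) - ((C₁ + η) / κ) * t ^ κ with hgdef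
    set b : ℝ → ℝ := fun t => (C₁ + η) * t ^ κ + C₂ * φ t + C₃ * φ t ^ ((2 : ℝ)/3)
        + C₄ * φ t ^ ((1 : ℝ)/3) with hbdef
    have hC : 0 < C₁ + η := by linarith
    refine lt_barrier (h := h) (h' := h') (φ := φ) (g := g) (b := b) (R := R) (B := B)
      (qt := qt) (qρ := qρ) (by linarith) ht₁ ht₁₀ hξ0
      (fun t ht ρ hρ => hqt t (hsub ht) ρ (hsubR hρ))
      (fun t ht ρ hρ => hqρ t (hsub ht) ρ (hsubR hρ))
      (hqρc.mono (Set.prod_mono hsub hsubR))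
      (hqc.mono (Set.prod_mono hsub (Set.Icc_subset_Icc_right hRR)))
      (fun t ht ρ hρ => hBnn t (hsub ht) ρ (Set.Ioo_subset_Icc_self (hsubR' hρ)))
      (fun t ht ρ hρ => hineq t (hsub ht) ρ (hsubR' hρ)) hφ hφ0 ?_ ?_ ?_ ?_ ?_ ?_
    · intro t ht
      have e := (((((hφ t ht).const_mul (C₂ / h')).const_add (R - K)).add
        ((hφp (2/3) t ht).const_mul (3 * C₃ / (2 * h')))).add
        ((hφp (1/3) t ht).const_mul (3 * C₄ / h'))).sub
        ((Real.hasDerivAt_rpow_const (p := κ) (Or.inl ht.ne')).const_mul ((C₁ + η) / κ))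
      refine e.congr_deriv ?_
      simp only [hbdef]
      rw [Real.rpow_sub_one ht.ne']
      field_simp
      ring
    · intro t ht
      have ht' : 0 < t := ht₁.trans_le ht.1
      have a1 := hφr t ht
      have a2 := Real.rpow_le_rpow (hφ0 t ht').le a1 (show (0 : ℝ) ≤ 2/3 by norm_num)
      have a3 := Real.rpow_le_rpow (hφ0 t ht').le a1 (show (0 : ℝ) ≤ 1/3 by norm_num)
      have b1 := mul_le_mul_of_nonneg_left a1 (show 0 ≤ C₂ / h' by positivity)
      have b2 := mul_le_mul_of_nonneg_left a2 (show 0 ≤ 3 * C₃ / (2 * h') by positivity)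
      have b3 := mul_le_mul_of_nonneg_left a3 (show 0 ≤ 3 * C₄ / h' by positivity)
      have b4 : 0 < (C₁ + η) / κ * t ^ κ := by positivity
      simp only [hgdef, hK]
      linarith
    · intro t ht
      have ht' : 0 < t := ht₁.trans_le ht.1
      have := hφ0 t ht'
      simp only [hbdef]
      positivity
    · intro t ht ρ hρ hq
      have ht' : 0 < t := ht₁.trans_le ht.1
      have hts : t ∈ Set.Ioc (0 : ℝ) σ₀ := hsub ⟨ht', ht.2⟩
      have a0 := hqnn t hts ρ (Set.Ioo_subset_Icc_self (hsubR' hρ))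
      have a1 := hBbd t hts ρ (hsubR' hρ)
      have a2 := Real.rpow_le_rpow a0 hq (show (0 : ℝ) ≤ 2/3 by norm_num)
      have a3 := Real.rpow_le_rpow a0 hq (show (0 : ℝ) ≤ 1/3 by norm_num)
      have b1 := mul_le_mul_of_nonneg_left hq hC₂.le
      have b2 := mul_le_mul_of_nonneg_left a2 hC₃.le
      have b3 := mul_le_mul_of_nonneg_left a3 hC₄.le
      have b4 : 0 < η * t ^ κ := by positivity
      simp only [hbdef]
      linarith
    · intro ρ hρ
      have a1 := hr t₁ ⟨ht₁, ht₁₀.le.trans ht₀σ⟩ ρ hρ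
      have a2 : φ t₁ = r' := by simp [hφdef, div_self ht₁.ne']
      rw [a2]
      linarith
    · have p0 := hφ0 t₀ ht₀
      have b1 : 0 ≤ (C₂ / h') * φ t₀ := by positivity
      have b2 : 0 ≤ (3 * C₃ / (2 * h')) * φ t₀ ^ ((2 : ℝ)/3) := by positivity
      have b3 : 0 ≤ (3 * C₄ / h') * φ t₀ ^ ((1 : ℝ)/3) := by positivity
      have b4 := mul_le_mul_of_nonneg_left (Real.rpow_le_rpow ht₀.le ht₀σ hκ0.le)
        (show 0 ≤ (C₁ + η) / κ by positivity)
      simp only [hgdef, hK]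
      linarith
  have hpos : ∀ t ∈ Set.Ioc (0 : ℝ) σ, ∀ ρ ∈ Set.Ioo (0 : ℝ) (R / 2), q t ρ = 0 := by
    intro t ht ρ hρ
    refine le_antisymm ?_ (hqnn t ⟨ht.1, ht.2.trans hσσ⟩ ρ ⟨hρ.1.le, by linarith [hρ.2]⟩)
    have hlim : Tendsto (fun t₁ : ℝ => r' * (t₁ / t) ^ h') (𝓝[>] 0) (𝓝 0) := by
      have : ContinuousAt (fun t₁ : ℝ => r' * (t₁ / t) ^ h') 0 :=
        continuousAt_const.mul (ContinuousAt.rpow_const (by fun_prop) (Or.inr hh'0.le))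
      have h1 := this.tendsto.mono_left (nhdsWithin_le_nhds (s := Set.Ioi 0))
      simpa [Real.zero_rpow hh'0.ne'] using h1
    refine ge_of_tendsto hlim ?_
    filter_upwards [Ioo_mem_nhdsGT ht.1] with t₁ ht₁
    exact (hbound t ht ρ hρ t₁ ht₁).le
  intro t ht ρ hρ
  rcases hρ.1.eq_or_lt with rfl | h0
  · have c := (hqρ t ⟨ht.1, ht.2.trans hσσ⟩ 0 ⟨le_rfl, hR₀⟩).continuousAt.tendsto.mono_left
      (nhdsWithin_le_nhds (s := Set.Ioi 0))
    refine tendsto_nhds_unique c (tendsto_const_nhds.congr' ?_)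
    filter_upwards [Ioo_mem_nhdsGT (show 0 < R / 2 by linarith)] with ρ hρ
    exact (hpos t ht ρ hρ).symm
  · exact hpos t ht ρ ⟨h0, hρ.2⟩
end
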